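/- Let θ1 ∈ C, let q(t) = 1 − ((2θ1−1) − (2θ1+1)√(1−t))/((2θ1−3) − (2θ1−1)√(1−t)) · √(1−t), and let τ(t) = (2(1−t)^{1/4}/(1+√(1−t)))^{(1−4θ1²)/4} on (0,1). Then t(t−1)·τ'(t)/τ(t) equals σ(t) − t(θt²−θ∞²)/4 + (θt²+θ0²−θ1²−θ∞²)/8 where σ(t) is the expression (t²(t−1)²/(4q(q−1)(q−t)))·(q' − q(q−1)/(t(t−1)))² − θ0² t/(4q) + θ1²(t−1)/(4(q−1)) − θt² t(t−1)/(4(q−t)) − θ∞²(q−1)/4 − θt² t/4 + (θt²+θ0²−θ1²−θ∞²)/8, evaluated with (θ0, θ1, θt, θ∞) = (1, θ1, 0, θ1). -/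

import Mathlib

/-!
Everything is rational in `s = √(1 - t)`, since `t = 1 - s ^ 2` and `ds/dt = -1 / (2 s)`. Writing
`D = (2θ - 3) - (2θ - 1) s`, `N = (2θ - 1) - (2θ + 1) s` and `M = (2θ + 1) s - (2θ - 3)`, the three
quantities in the denominators of `σ` factor as
`q = (s - 1) M / D`, `q - 1 = -N s / D`, `q - t = -(2θ - 1) s (s - 1) ^ 2 / D`.
The logarithmic derivative of the base of `τ` is `(s - 1) / (4 s ^ 2 (1 + s))`
(`hasDerivAt_tau_base`), so the left-hand side is `(1 - 4 θ ^ 2) (1 - s) ^ 2 / 16`. After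
substituting the factorizations and the formula for `q'` (`hasDerivAt_q`), the identity becomes a
rational function identity in `s` and `θ` (`sigma_identity`).
-/

lemma hasDerivAt_sqrt_one_sub {t : ℝ} (ht : t < 1) :
    HasDerivAt (fun t : ℝ => √(1 - t)) (-1 / (2 * √(1 - t))) t :=
  ((hasDerivAt_id t).const_sub 1).sqrt (by simp only [id]; linarith)

lemma hasDerivAt_tau_base {t : ℝ} (ht : t < 1) :
    HasDerivAt (fun t : ℝ => 2 * (1 - t) ^ ((1 : ℝ) / 4) / (1 + √(1 - t)))
      (2 * (1 - t) ^ ((1 : ℝ) / 4) / (1 + √(1 - t)) *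
        ((√(1 - t) - 1) / (4 * √(1 - t) ^ 2 * (1 + √(1 - t))))) t := by
  have h1 : 0 < 1 - t := by linarith
  have hs : 0 < √(1 - t) := Real.sqrt_pos.mpr h1
  have hsq : √(1 - t) ^ 2 = 1 - t := Real.sq_sqrt h1.le
  have hr : HasDerivAt (fun t : ℝ => (1 - t) ^ ((1 : ℝ) / 4))
      (-1 * (1 / 4) * ((1 - t) ^ ((1 : ℝ) / 4) / √(1 - t) ^ 2)) t := by
    rw [hsq, ← Real.rpow_sub_one h1.ne']
    exact ((hasDerivAt_id t).const_sub 1).rpow_const (Or.inl h1.ne')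
  have h := (hr.const_mul 2).div ((hasDerivAt_sqrt_one_sub ht).const_add 1) (by positivity)
  refine h.congr_deriv ?_
  generalize (1 - t) ^ ((1 : ℝ) / 4) = r
  generalize √(1 - t) = s at hs
  field_simp
  ring

lemma hasDerivAt_q (θ : ℂ) {t : ℝ} (ht : t < 1)
    (hD : (2 * θ - 3) - (2 * θ - 1) * (√(1 - t) : ℂ) ≠ 0) :
    HasDerivAt (fun t : ℝ => 1 -
        ((2 * θ - 1) - (2 * θ + 1) * (√(1 - t) : ℂ)) /
          ((2 * θ - 3) - (2 * θ - 1) * (√(1 - t) : ℂ)) * (√(1 - t) : ℂ))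
      ((((2 * θ - 1) - 2 * (2 * θ + 1) * (√(1 - t) : ℂ)) *
          ((2 * θ - 3) - (2 * θ - 1) * (√(1 - t) : ℂ)) +
          (2 * θ - 1) * ((2 * θ - 1) - (2 * θ + 1) * (√(1 - t) : ℂ)) * (√(1 - t) : ℂ)) /
        ((2 * θ - 3) - (2 * θ - 1) * (√(1 - t) : ℂ)) ^ 2 / (2 * (√(1 - t) : ℂ))) t := by
  have hs : (√(1 - t) : ℂ) ≠ 0 := by
    exact_mod_cast (Real.sqrt_pos.mpr (sub_pos.mpr ht)).ne'
  have h0 := (hasDerivAt_sqrt_one_sub ht).ofReal_comp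
  have hN := (h0.const_mul (2 * θ + 1)).const_sub (2 * θ - 1)
  have hDd := (h0.const_mul (2 * θ - 1)).const_sub (2 * θ - 3)
  refine (((hN.div hDd hD).mul h0).const_sub 1).congr_deriv ?_
  push_cast
  simp only [Pi.div_apply]
  generalize (√(1 - t) : ℂ) = s at hs hD
  field_simp
  ring

/-- The identity between the two sides after the substitution `t = 1 - s ^ 2`. -/
lemma sigma_identity (θ s t q dq : ℂ) (ht : t = 1 - s ^ 2) (hs : s ≠ 0) (hs1 : s - 1 ≠ 0)
    (hs2 : 1 + s ≠ 0) (hD : (2 * θ - 3) - (2 * θ - 1) * s ≠ 0)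
    (hq : q = 1 - ((2 * θ - 1) - (2 * θ + 1) * s) / ((2 * θ - 3) - (2 * θ - 1) * s) * s)
    (hdq : dq = (((2 * θ - 1) - 2 * (2 * θ + 1) * s) * ((2 * θ - 3) - (2 * θ - 1) * s) +
          (2 * θ - 1) * ((2 * θ - 1) - (2 * θ + 1) * s) * s) /
        ((2 * θ - 3) - (2 * θ - 1) * s) ^ 2 / (2 * s))
    (hq0 : q ≠ 0) (hq1 : q ≠ 1) (hqt : q ≠ t) :
    (1 - 4 * θ ^ 2) * (1 - s) ^ 2 / 16 =
      t ^ 2 * (t - 1) ^ 2 / (4 * q * (q - 1) * (q - t)) * (dq - q * (q - 1) / (t * (t - 1))) ^ 2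
        - t / (4 * q) + θ ^ 2 * (t - 1) / (4 * (q - 1)) - θ ^ 2 * (q - 1) / 4
        + (1 - 2 * θ ^ 2) / 4 + t * θ ^ 2 / 4 := by
  obtain ⟨D, hDdef⟩ : ∃ D, D = (2 * θ - 3) - (2 * θ - 1) * s := ⟨_, rfl⟩
  obtain ⟨N, hNdef⟩ : ∃ N, N = (2 * θ - 1) - (2 * θ + 1) * s := ⟨_, rfl⟩
  obtain ⟨M, hMdef⟩ : ∃ M, M = (2 * θ + 1) * s - (2 * θ - 3) := ⟨_, rfl⟩
  obtain ⟨k, hk⟩ : ∃ k, k = 2 * θ - 1 := ⟨_, rfl⟩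
  rw [← hDdef] at hD hq hdq
  rw [← hNdef] at hq hdq
  have e0 : q = (s - 1) * M / D := by
    rw [hq]; field_simp; rw [hDdef, hNdef, hMdef]; ring
  have e1 : q - 1 = -(N * s) / D := by
    rw [hq]; field_simp; ring
  have et : q - t = -(k * s * (s - 1) ^ 2) / D := by
    rw [hq, ht]; field_simp; rw [hDdef, hNdef, hk]; ring
  have hM : M ≠ 0 := by
    rintro h; apply hq0; rw [e0, h]; simp
  have hN : N ≠ 0 := by
    rintro h; apply sub_ne_zero.mpr hq1; rw [e1, h]; simp
  have hk0 : k ≠ 0 := by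
    rintro h; apply sub_ne_zero.mpr hqt; rw [et, h]; simp
  have ht0 : t = -((s - 1) * (1 + s)) := by rw [ht]; ring
  have ht1 : t - 1 = -s ^ 2 := by rw [ht]; ring
  have key : dq - q * (q - 1) / (t * (t - 1)) =
      (((k - 2 * (2 * θ + 1) * s) * D + k * N * s) * (1 + s) + 2 * M * N) /
        (2 * s * (1 + s) * D ^ 2) := by
    rw [e1, e0, ht1, ht0, hdq, ← hk]; field_simp; ring
  rw [key, et, e1, e0, ht1, ht0]
  field_simp
  rw [hDdef, hNdef, hMdef, hk]
  ring

/-- The explicit function `τ(t) = (2(1−t)^{1/4}/(1+√(1−t)))^{(1−4θ1²)/4}` is the JMU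
tau function of the algebraic Painlevé VI solution `q` with parameters (1, θ1, 0, θ1):
`t(t−1) τ'/τ = σ(t) − t(θt²−θ∞²)/4 + (θt²+θ0²−θ1²−θ∞²)/8`. -/
theorem algebraic_tau_function (θ1 : ℂ) :
    ∀ q τ : ℝ → ℂ,
      (q = fun t : ℝ => 1 -
        ((2 * θ1 - 1) - (2 * θ1 + 1) * (Real.sqrt (1 - t) : ℂ)) /
          ((2 * θ1 - 3) - (2 * θ1 - 1) * (Real.sqrt (1 - t) : ℂ)) * (Real.sqrt (1 - t) : ℂ)) →
      (τ = fun t : ℝ =>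
        ((2 * (1 - t) ^ ((1 : ℝ) / 4) / (1 + Real.sqrt (1 - t)) : ℝ) : ℂ)
          ^ ((1 - 4 * θ1 ^ 2) / 4)) →
      ∀ t ∈ Set.Ioo (0 : ℝ) 1,
        (2 * θ1 - 3) - (2 * θ1 - 1) * (Real.sqrt (1 - t) : ℂ) ≠ 0 →
        q t ≠ 0 → q t ≠ 1 → q t ≠ (t : ℂ) → τ t ≠ 0 →
        (t : ℂ) * ((t : ℂ) - 1) * deriv τ t / τ t =
          ((t : ℂ) ^ 2 * ((t : ℂ) - 1) ^ 2 / (4 * q t * (q t - 1) * (q t - (t : ℂ)))) *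
              (deriv q t - q t * (q t - 1) / ((t : ℂ) * ((t : ℂ) - 1))) ^ 2
            - (1 : ℂ) ^ 2 * (t : ℂ) / (4 * q t)
            + θ1 ^ 2 * ((t : ℂ) - 1) / (4 * (q t - 1))
            - (0 : ℂ) ^ 2 * (t : ℂ) * ((t : ℂ) - 1) / (4 * (q t - (t : ℂ)))
            - θ1 ^ 2 * (q t - 1) / 4
            - (0 : ℂ) ^ 2 * (t : ℂ) / 4
            + ((0 : ℂ) ^ 2 + (1 : ℂ) ^ 2 - θ1 ^ 2 - θ1 ^ 2) / 8
          - (t : ℂ) * ((0 : ℂ) ^ 2 - θ1 ^ 2) / 4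
          + ((0 : ℂ) ^ 2 + (1 : ℂ) ^ 2 - θ1 ^ 2 - θ1 ^ 2) / 8 := by
  rintro q τ hq hτ t ⟨ht0, ht1⟩ hD hq0 hq1 hqt hτ0
  have h1 : 0 < 1 - t := sub_pos.mpr ht1
  have hs : 0 < √(1 - t) := Real.sqrt_pos.mpr h1
  have hsq : √(1 - t) ^ 2 = 1 - t := Real.sq_sqrt h1.le
  have hs1 : √(1 - t) - 1 ≠ 0 := by
    intro h
    rw [sub_eq_zero.mp h] at hsq
    linarith
  have hs2 : 1 + √(1 - t) ≠ 0 := by positivity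
  have hb : 0 < 2 * (1 - t) ^ ((1 : ℝ) / 4) / (1 + √(1 - t)) := by positivity
  have hdq := hasDerivAt_q θ1 ht1 hD
  rw [← hq] at hdq
  have hqv := congrFun hq t
  have hdτ : HasDerivAt τ (τ t * ((1 - 4 * θ1 ^ 2) / 4 *
      ((√(1 - t) - 1) / (4 * (√(1 - t) : ℂ) ^ 2 * (1 + √(1 - t)))))) t := by
    have hbase := (hasDerivAt_tau_base ht1).ofReal_comp
    -- The base is positive, so it avoids the branch cut of the complex power.
    have hpow := ((hasDerivAt_id
      ((2 * (1 - t) ^ ((1 : ℝ) / 4) / (1 + √(1 - t)) : ℝ) : ℂ)).cpow_const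
      (c := (1 - 4 * θ1 ^ 2) / 4) (Complex.ofReal_mem_slitPlane.mpr hb)).comp t hbase
    rw [hτ]
    refine hpow.congr_deriv ?_
    have hb' := Complex.ofReal_ne_zero.mpr hb.ne'
    simp only [id, Complex.cpow_sub _ _ hb', Complex.cpow_one]
    rw [Complex.ofReal_mul]
    generalize Complex.ofReal (2 * (1 - t) ^ ((1 : ℝ) / 4) / (1 + √(1 - t))) = b at hb'
    push_cast
    field_simp
  rw [hdτ.deriv]
  have htC : (t : ℂ) = 1 - (√(1 - t) : ℂ) ^ 2 := by
    rw [← Complex.ofReal_pow, hsq]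
    push_cast
    ring
  have hsC : (√(1 - t) : ℂ) ≠ 0 := by exact_mod_cast hs.ne'
  have hs1C : (√(1 - t) : ℂ) - 1 ≠ 0 := by exact_mod_cast hs1
  have hs2C : 1 + (√(1 - t) : ℂ) ≠ 0 := by exact_mod_cast hs2
  have hid := sigma_identity θ1 _ t (q t) (deriv q t) htC hsC hs1C hs2C hD hqv hdq.deriv
    hq0 hq1 hqt
  have hL : (t : ℂ) * ((t : ℂ) - 1) * (τ t * ((1 - 4 * θ1 ^ 2) / 4 *
      ((√(1 - t) - 1) / (4 * (√(1 - t) : ℂ) ^ 2 * (1 + √(1 - t)))))) / τ t =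
      (1 - 4 * θ1 ^ 2) * (1 - √(1 - t)) ^ 2 / 16 := by
    have h2 : (t : ℂ) * ((t : ℂ) - 1) =
        (√(1 - t) - 1) * (1 + √(1 - t)) * (√(1 - t) : ℂ) ^ 2 := by
      generalize (√(1 - t) : ℂ) = s at htC
      rw [htC]; ring
    rw [h2]
    field_simp
    ring
  rw [hL, hid]
  ring
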